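/- arXiv:1905.12615 — 6 statements merged into one kernel-verified Lean document; each statement's English description precedes it below -/
import Mathlib

section
/- Let d ∈ ℕ, L > 0, and let J : ℝ^d → ℝ be differentiable with L-Lipschitz gradient, i.e. ‖∇J(x) − ∇J(y)‖₂ ≤ L‖x − y‖₂ for all x, y. Then for any θ, v ∈ ℝ^d and any step size η > 0, setting θ' = θ + ηv, one has J(θ') ≥ J(θ) − (3η/4)‖∇J(θ) − v‖₂² + (1/(4η) − L/2)‖θ' − θ‖₂² + (η/8)‖∇J(θ)‖₂². -/
/-- Quadratic lower bound for a function with `L`-Lipschitz gradient on a Hilbert space. -/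
theorem quadratic_lower_bound_of_gradient_lipschitz {E : Type*} [NormedAddCommGroup E]
    [InnerProductSpace ℝ E] [CompleteSpace E] {J : E → ℝ} {L : ℝ} (hdiff : Differentiable ℝ J)
    (hlip : ∀ x y : E, ‖gradient J x - gradient J y‖ ≤ L * ‖x - y‖) (x w : E) :
    J x + inner ℝ (gradient J x) w - L / 2 * ‖w‖ ^ 2 ≤ J (x + w) := by
  set φ : ℝ → ℝ := fun t =>
    J (x + t • w) - t * inner ℝ (gradient J x) w + L / 2 * ‖w‖ ^ 2 * t ^ 2 with hφ
  have hderiv (t : ℝ) : HasDerivAt φ (inner ℝ (gradient J (x + t • w)) w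
      - inner ℝ (gradient J x) w + L * ‖w‖ ^ 2 * t) t := by
    have hline : HasDerivAt (fun t : ℝ => x + t • w) w t := by
      simpa using ((hasDerivAt_id t).smul_const w).const_add x
    have hJ : HasDerivAt (fun t : ℝ => J (x + t • w)) (inner ℝ (gradient J (x + t • w)) w) t := by
      exact (hdiff (x + t • w)).hasGradientAt.hasFDerivAt.comp_hasDerivAt t hline
    refine ((hJ.sub ((hasDerivAt_id t).mul_const (inner ℝ (gradient J x) w))).add
      ((hasDerivAt_pow 2 t).const_mul (L / 2 * ‖w‖ ^ 2))).congr_deriv ?_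
    push_cast
    ring
  have hmono : MonotoneOn φ (Set.Icc 0 1) := by
    refine monotoneOn_of_deriv_nonneg (convex_Icc 0 1)
      (fun t _ => (hderiv t).continuousAt.continuousWithinAt)
      (fun t _ => (hderiv t).differentiableAt.differentiableWithinAt) fun t ht => ?_
    rw [interior_Icc] at ht
    rw [(hderiv t).deriv, ← inner_sub_left]
    have hgrad := hlip (x + t • w) x
    rw [add_sub_cancel_left, norm_smul, Real.norm_of_nonneg ht.1.le] at hgrad
    have hinner := neg_le_of_abs_le
      (abs_real_inner_le_norm (gradient J (x + t • w) - gradient J x) w)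
    nlinarith [mul_le_mul_of_nonneg_right hgrad (norm_nonneg w)]
  have h01 := hmono (Set.left_mem_Icc.2 zero_le_one) (Set.right_mem_Icc.2 zero_le_one) zero_le_one
  simp only [hφ, zero_smul, one_smul, add_zero] at h01
  linarith

/-- One-step ascent inequality for an `L`-smooth performance function `J` under an
inexact gradient step `θ' = θ + η • v`. -/
theorem svrpg_one_step_ascent {d : ℕ} (L η : ℝ) (hL : 0 < L) (hη : 0 < η)
    (J : EuclideanSpace ℝ (Fin d) → ℝ)
    (hdiff : Differentiable ℝ J)
    (hlip : ∀ x y : EuclideanSpace ℝ (Fin d),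
      ‖gradient J x - gradient J y‖ ≤ L * ‖x - y‖)
    (θ v : EuclideanSpace ℝ (Fin d)) :
    J (θ + η • v) ≥ J θ - (3 * η / 4) * ‖gradient J θ - v‖ ^ 2
      + (1 / (4 * η) - L / 2) * ‖(θ + η • v) - θ‖ ^ 2
      + (η / 8) * ‖gradient J θ‖ ^ 2 := by
  have hbound := quadratic_lower_bound_of_gradient_lipschitz hdiff hlip θ (η • v)
  have hnorm : ‖η • v‖ ^ 2 = η ^ 2 * ‖v‖ ^ 2 := by
    rw [norm_smul, Real.norm_of_nonneg hη.le, mul_pow]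
  rw [inner_smul_right, hnorm] at hbound
  have hcoef : (1 / (4 * η) - L / 2) * (η ^ 2 * ‖v‖ ^ 2)
      = η / 4 * ‖v‖ ^ 2 - L / 2 * (η ^ 2 * ‖v‖ ^ 2) := by
    field_simp
  rw [add_sub_cancel_left, hnorm, hcoef]
  have hpolar : η * inner ℝ (gradient J θ) v
      = η / 2 * (‖gradient J θ‖ ^ 2 + ‖v‖ ^ 2 - ‖gradient J θ - v‖ ^ 2) := by
    rw [norm_sub_sq_real]
    ring
  have hg : 0 ≤ η * ‖gradient J θ‖ ^ 2 := by positivity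
  have hv : 0 ≤ η * ‖v‖ ^ 2 := by positivity
  have hgv : 0 ≤ η * ‖gradient J θ - v‖ ^ 2 := by positivity
  linarith
end

section
/- Let d ∈ ℕ, L > 0, and let J : ℝ^d → ℝ be differentiable with L-Lipschitz gradient. Let C ≥ 0, e ≥ 0, B > 0, m ≥ 1 an integer, and let the step size satisfy 0 < η ≤ 1/(4L) and the batch parameters satisfy B/m² ≥ 3C/(2L²). Suppose θ_0, θ_1, …, θ_m ∈ ℝ^d and v_0, …, v_{m−1} ∈ ℝ^d satisfy θ_{t+1} = θ_t + η v_t for all 0 ≤ t ≤ m−1, and the gradient-estimation error bound ‖∇J(θ_t) − v_t‖₂² ≤ e + (C/B)‖θ_t − θ_0‖₂² holds for all 0 ≤ t ≤ m−1. Then J(θ_m) ≥ J(θ_0) + (η/8)·Σ_{t=0}^{m−1} ‖∇J(θ_t)‖₂² − (3mη/4)·e. -/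
/-- Quadratic lower bound for a function with `L`-Lipschitz gradient. -/
lemma quadratic_lower_bound_of_lipschitz_gradient {E : Type*} [NormedAddCommGroup E]
    [InnerProductSpace ℝ E] [CompleteSpace E] {J : E → ℝ} {L : ℝ}
    (hdiff : Differentiable ℝ J)
    (hlip : ∀ x y : E, ‖gradient J x - gradient J y‖ ≤ L * ‖x - y‖) (x u : E) :
    J x + inner ℝ (gradient J x) u - L / 2 * ‖u‖ ^ 2 ≤ J (x + u) := by
  set φ : ℝ → ℝ := fun s =>
    J (x + s • u) - s * inner ℝ (gradient J x) u + L / 2 * ‖u‖ ^ 2 * s ^ 2 with hφ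
  have hderiv : ∀ s : ℝ, HasDerivAt φ
      (inner ℝ (gradient J (x + s • u) - gradient J x) u + L * ‖u‖ ^ 2 * s) s := by
    intro s
    have hline : HasDerivAt (fun s : ℝ => x + s • u) u s := by
      simpa using ((hasDerivAt_id s).smul_const u).const_add x
    have hJ := (hdiff (x + s • u)).hasGradientAt.hasFDerivAt.comp_hasDerivAt s hline
    have h := (hJ.sub ((hasDerivAt_id s).mul_const (inner ℝ (gradient J x) u))).add
      ((hasDerivAt_pow 2 s).const_mul (L / 2 * ‖u‖ ^ 2))
    refine h.congr_deriv ?_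
    simp only [InnerProductSpace.toDual_apply_apply, inner_sub_left]
    norm_num
    ring
  have hmono : MonotoneOn φ (Set.Icc 0 1) := by
    refine monotoneOn_of_deriv_nonneg (convex_Icc 0 1)
      (fun s _ => (hderiv s).continuousAt.continuousWithinAt)
      (fun s _ => (hderiv s).differentiableAt.differentiableWithinAt) fun s hs => ?_
    rw [interior_Icc] at hs
    rw [(hderiv s).deriv]
    have hinner := neg_le_of_abs_le
      (abs_real_inner_le_norm (gradient J (x + s • u) - gradient J x) u)
    have hgrad := hlip (x + s • u) x
    rw [add_sub_cancel_left, norm_smul, Real.norm_of_nonneg hs.1.le] at hgrad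
    nlinarith [mul_le_mul_of_nonneg_right hgrad (norm_nonneg u)]
  have h := hmono (Set.left_mem_Icc.2 zero_le_one) (Set.right_mem_Icc.2 zero_le_one) zero_le_one
  simp only [hφ, zero_smul, one_smul, add_zero] at h
  linarith

/-- The squared displacement after `t ≤ m` steps is at most `m` times the sum of all `m`
squared step lengths. -/
lemma norm_sub_zero_sq_le_mul_sum_sq {E : Type*} [NormedAddCommGroup E] [NormedSpace ℝ E]
    {θ v : ℕ → E} {η : ℝ} {m t : ℕ} (hstep : ∀ s < m, θ (s + 1) = θ s + η • v s)
    (ht : t ≤ m) :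
    ‖θ t - θ 0‖ ^ 2 ≤ m * (η ^ 2 * ∑ s ∈ Finset.range m, ‖v s‖ ^ 2) := by
  have hsum : ‖θ t - θ 0‖ ≤ ∑ s ∈ Finset.range m, ‖η • v s‖ := by
    rw [← Finset.sum_range_sub]
    refine (norm_sum_le _ _).trans ?_
    calc ∑ s ∈ Finset.range t, ‖θ (s + 1) - θ s‖
        = ∑ s ∈ Finset.range t, ‖η • v s‖ := Finset.sum_congr rfl fun s hs => by
          rw [hstep s ((Finset.mem_range.1 hs).trans_le ht), add_sub_cancel_left]
      _ ≤ ∑ s ∈ Finset.range m, ‖η • v s‖ :=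
          Finset.sum_le_sum_of_subset_of_nonneg (Finset.range_mono ht)
            fun _ _ _ => norm_nonneg _
  calc ‖θ t - θ 0‖ ^ 2 ≤ (∑ s ∈ Finset.range m, ‖η • v s‖) ^ 2 := by gcongr
    _ ≤ m * ∑ s ∈ Finset.range m, ‖η • v s‖ ^ 2 := by
      simpa using sq_sum_le_card_mul_sum_sq (s := Finset.range m) (f := fun s => ‖η • v s‖)
    _ = m * (η ^ 2 * ∑ s ∈ Finset.range m, ‖v s‖ ^ 2) := by
      simp only [norm_smul, mul_pow, Finset.mul_sum, Real.norm_eq_abs, sq_abs]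

/-- Ascent guaranteed by one inexact gradient step with `L * η ≤ 1 / 4`. -/
lemma inexact_gradient_step_ascent {E : Type*} [NormedAddCommGroup E]
    [InnerProductSpace ℝ E] [CompleteSpace E] {J : E → ℝ} {L η : ℝ}
    (hdiff : Differentiable ℝ J)
    (hlip : ∀ x y : E, ‖gradient J x - gradient J y‖ ≤ L * ‖x - y‖)
    (hη : 0 ≤ η) (hLη : L * η ≤ 1 / 4) (x v : E) :
    η / 2 * ‖gradient J x‖ ^ 2 + 3 * η / 8 * ‖v‖ ^ 2 - η / 2 * ‖gradient J x - v‖ ^ 2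
      ≤ J (x + η • v) - J x := by
  have h := quadratic_lower_bound_of_lipschitz_gradient hdiff hlip x (η • v)
  rw [real_inner_smul_right, norm_smul, mul_pow, Real.norm_eq_abs, sq_abs] at h
  have hpol := norm_sub_sq_real (gradient J x) v
  have hv := mul_le_mul_of_nonneg_right hLη (mul_nonneg hη (sq_nonneg ‖v‖))
  rw [hpol]
  linarith


/-- Single-epoch analysis of SVRPG: within one epoch of length `m`, inexact gradient
ascent steps `θ_{t+1} = θ_t + η • v_t` whose squared gradient-estimation error is bounded
by `e + (C/B) * ‖θ_t - θ_0‖²` yield the stated ascent guarantee. -/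
theorem svrpg_single_epoch {d : ℕ} (L C e B η : ℝ) (m : ℕ)
    (hL : 0 < L) (hC : 0 ≤ C) (he : 0 ≤ e) (hB : 0 < B) (hm : 1 ≤ m)
    (hη : 0 < η) (hηL : η ≤ 1 / (4 * L))
    (hBm : B / (m : ℝ) ^ 2 ≥ 3 * C / (2 * L ^ 2))
    (J : EuclideanSpace ℝ (Fin d) → ℝ)
    (hdiff : Differentiable ℝ J)
    (hlip : ∀ x y : EuclideanSpace ℝ (Fin d),
      ‖gradient J x - gradient J y‖ ≤ L * ‖x - y‖)
    (θ v : ℕ → EuclideanSpace ℝ (Fin d))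
    (hstep : ∀ t < m, θ (t + 1) = θ t + η • v t)
    (herr : ∀ t < m, ‖gradient J (θ t) - v t‖ ^ 2 ≤ e + (C / B) * ‖θ t - θ 0‖ ^ 2) :
    J (θ m) ≥ J (θ 0) + (η / 8) * ∑ t ∈ Finset.range m, ‖gradient J (θ t)‖ ^ 2
      - (3 * (m : ℝ) * η / 4) * e := by
  have hm0 : (0 : ℝ) < m := by exact_mod_cast hm
  have hLη : L * η ≤ 1 / 4 := by
    rw [le_div_iff₀ (by positivity)] at hηL
    linarith
  set G := ∑ t ∈ Finset.range m, ‖gradient J (θ t)‖ ^ 2 with hG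
  set V := ∑ t ∈ Finset.range m, ‖v t‖ ^ 2 with hV
  have hG0 : 0 ≤ G := by positivity
  have hV0 : 0 ≤ V := by positivity
  have hCB : C / B * (m : ℝ) ^ 2 ≤ 2 * L ^ 2 / 3 := by
    rw [ge_iff_le, div_le_div_iff₀ (by positivity) (by positivity)] at hBm
    rw [div_mul_eq_mul_div, div_le_div_iff₀ hB (by norm_num)]
    linarith
  have herr_sum : ∑ t ∈ Finset.range m, ‖gradient J (θ t) - v t‖ ^ 2 ≤ m * e + V / 24 := by
    have hbound : ∀ t ∈ Finset.range m,
        ‖gradient J (θ t) - v t‖ ^ 2 ≤ e + C / B * (m * (η ^ 2 * V)) := fun t ht => by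
      have ht := Finset.mem_range.1 ht
      refine (herr t ht).trans ?_
      gcongr
      exact norm_sub_zero_sq_le_mul_sum_sq hstep ht.le
    have hsum := Finset.sum_le_sum hbound
    rw [Finset.sum_const, Finset.card_range, nsmul_eq_mul] at hsum
    have hsq : (L * η) ^ 2 ≤ (1 / 4) ^ 2 := by gcongr
    calc _ ≤ _ := hsum
      _ = m * e + C / B * (m : ℝ) ^ 2 * (η ^ 2 * V) := by ring
      _ ≤ m * e + 2 * L ^ 2 / 3 * (η ^ 2 * V) := by gcongr
      _ = m * e + 2 / 3 * ((L * η) ^ 2 * V) := by ring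
      _ ≤ m * e + 2 / 3 * ((1 / 4) ^ 2 * V) := by gcongr
      _ = m * e + V / 24 := by ring
  have hascent : η / 2 * G + 3 * η / 8 * V
      - η / 2 * ∑ t ∈ Finset.range m, ‖gradient J (θ t) - v t‖ ^ 2 ≤ J (θ m) - J (θ 0) := by
    rw [← Finset.sum_range_sub (fun t => J (θ t)), hG, hV, Finset.mul_sum, Finset.mul_sum,
      Finset.mul_sum, ← Finset.sum_add_distrib, ← Finset.sum_sub_distrib]
    refine Finset.sum_le_sum fun t ht => ?_
    rw [hstep t (Finset.mem_range.1 ht)]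
    exact inexact_gradient_step_ascent hdiff hlip hη.le hLη (θ t) (v t)
  have herr_scaled := mul_le_mul_of_nonneg_left herr_sum (half_pos hη).le
  have hηG := mul_nonneg hη.le hG0
  have hηV := mul_nonneg hη.le hV0
  have hηe : 0 ≤ η * (m * e) := by positivity
  linarith
end

section
/- For all Δ > 0, σ > 0 and η > 0 there exists a constant c > 0 such that for every ε ∈ (0, 1], setting N = ⌈12σ²/ε⌉, B = ⌈ε^{−2/3}⌉, m = ⌈√B⌉ and S = ⌈16Δ/(η ε m)⌉, the total number of sampled trajectories satisfies S·N + S·m·B ≤ c·ε^{−5/3}. Moreover, with these choices, 8Δ/(η S m) + 6σ²/ N ≤ ε. -/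
/-- If `n` dominates `2 * a / ε`, then `a / n ≤ ε / 2`. -/
lemma div_le_half_of_two_mul_div_le {a ε n : ℝ} (ha : 0 < a) (hε : 0 < ε)
    (h : 2 * a / ε ≤ n) : a / n ≤ ε / 2 := by
  have hn : 0 < n := lt_of_lt_of_le (by positivity) h
  rw [div_le_iff₀ hε] at h
  rw [div_le_iff₀ hn]
  linarith

/-- Sample-complexity corollary for SVRPG: with `N = ⌈12σ²/ε⌉`, `B = ⌈ε^{-2/3}⌉`,
`m = ⌈√B⌉` and `S = ⌈16Δ/(ηεm)⌉`, the total trajectory count `S·N + S·m·B` is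
`O(ε^{-5/3})`, and moreover `8Δ/(ηSm) + 6σ²/N ≤ ε`. -/
theorem svrpg_sample_complexity (Δ σ η : ℝ) (hΔ : 0 < Δ) (hσ : 0 < σ) (hη : 0 < η) :
    ∃ c : ℝ, 0 < c ∧ ∀ ε : ℝ, ε ∈ Set.Ioc (0 : ℝ) 1 →
      ∀ N B m S : ℕ,
        N = ⌈12 * σ ^ 2 / ε⌉₊ →
        B = ⌈ε ^ (-(2 : ℝ) / 3)⌉₊ →
        m = ⌈Real.sqrt (B : ℝ)⌉₊ →
        S = ⌈16 * Δ / (η * ε * (m : ℝ))⌉₊ →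
        ((S * N + S * m * B : ℕ) : ℝ) ≤ c * ε ^ (-(5 : ℝ) / 3) ∧
        8 * Δ / (η * (S : ℝ) * (m : ℝ)) + 6 * σ ^ 2 / (N : ℝ) ≤ ε := by
  have hK : 0 < 16 * Δ / η := by positivity
  refine ⟨(16 * Δ / η + 1) * (12 * σ ^ 2 + 7), by positivity, ?_⟩
  rintro ε ⟨hε, hε1⟩ N B m S hN hB hm hS
  -- Everything is a polynomial in `t = ε ^ (-1/3)`.
  obtain ⟨t, ht⟩ : ∃ t : ℝ, t = ε ^ (-(1 : ℝ) / 3) := ⟨_, rfl⟩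
  have ht1 : 1 ≤ t := ht ▸ Real.one_le_rpow_of_pos_of_le_one_of_nonpos hε hε1 (by norm_num)
  have ht0 : 0 < t := by linarith
  have hpow (n : ℕ) : t ^ n = ε ^ (-(1 : ℝ) / 3 * n) := by
    rw [ht, ← Real.rpow_natCast, ← Real.rpow_mul hε.le]
  have ht2 : ε ^ (-(2 : ℝ) / 3) = t ^ 2 := by rw [hpow]; norm_num
  have ht5 : ε ^ (-(5 : ℝ) / 3) = t ^ 5 := by rw [hpow]; norm_num
  have ht3 : ε⁻¹ = t ^ 3 := by rw [hpow, ← Real.rpow_neg_one]; norm_num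
  have hone (n : ℕ) : 1 ≤ t ^ n := one_le_pow₀ ht1
  have hN_ge : 12 * σ ^ 2 / ε ≤ N := hN ▸ Nat.le_ceil _
  have hN_le : (N : ℝ) ≤ (12 * σ ^ 2 + 1) * t ^ 3 := by
    have h : (N : ℝ) < 12 * σ ^ 2 / ε + 1 := hN ▸ Nat.ceil_lt_add_one (by positivity)
    rw [div_eq_mul_inv, ht3] at h
    linarith [hone 3]
  rw [ht2] at hB
  have hB_ge : t ^ 2 ≤ B := hB ▸ Nat.le_ceil _
  have hB_le : (B : ℝ) ≤ 2 * t ^ 2 := by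
    have h : (B : ℝ) < t ^ 2 + 1 := hB ▸ Nat.ceil_lt_add_one (by positivity)
    linarith [hone 2]
  have hm_ge : t ≤ m := (Real.le_sqrt_of_sq_le hB_ge).trans (hm ▸ Nat.le_ceil _)
  have hm_le : (m : ℝ) ≤ 3 * t := by
    have h : (m : ℝ) < √(B : ℝ) + 1 := hm ▸ Nat.ceil_lt_add_one (Real.sqrt_nonneg _)
    have hsqrt : √(B : ℝ) ≤ 2 * t := Real.sqrt_le_iff.2 ⟨by positivity, by nlinarith⟩
    linarith
  have hm0 : (0 : ℝ) < m := ht0.trans_le hm_ge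
  have hS_ge : 16 * Δ / (η * ε * m) ≤ S := hS ▸ Nat.le_ceil _
  have hS_le : (S : ℝ) ≤ (16 * Δ / η + 1) * t ^ 2 := by
    have h : (S : ℝ) < 16 * Δ / (η * ε * m) + 1 := hS ▸ Nat.ceil_lt_add_one (by positivity)
    have hdiv : 16 * Δ / (η * ε * m) ≤ 16 * Δ / η * t ^ 2 := by
      calc 16 * Δ / (η * ε * m) = 16 * Δ / η * (ε⁻¹ / m) := by field_simp
        _ ≤ 16 * Δ / η * (ε⁻¹ / t) := by gcongr
        _ = 16 * Δ / η * t ^ 2 := by rw [ht3]; field_simp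
    linarith [hone 2]
  constructor
  · rw [ht5]
    push_cast
    calc (S : ℝ) * N + S * m * B
        ≤ ((16 * Δ / η + 1) * t ^ 2) * ((12 * σ ^ 2 + 1) * t ^ 3)
          + ((16 * Δ / η + 1) * t ^ 2) * (3 * t) * (2 * t ^ 2) := by gcongr
      _ = (16 * Δ / η + 1) * (12 * σ ^ 2 + 7) * t ^ 5 := by ring
  · have hSm : 2 * (8 * Δ) / ε ≤ η * S * m := by
      calc 2 * (8 * Δ) / ε = η * (16 * Δ / (η * ε * m)) * m := by field_simp; norm_num
        _ ≤ η * S * m := by gcongr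
    have hfirst := div_le_half_of_two_mul_div_le (by positivity) hε hSm
    have hsecond : 6 * σ ^ 2 / (N : ℝ) ≤ ε / 2 :=
      div_le_half_of_two_mul_div_le (by positivity) hε (by convert hN_ge using 2; ring)
    linarith
end

section
/- Let (T, 𝒯, μ) be a measure space, d ∈ ℕ, and let p : ℝ^d × T → (0, ∞) be a family of strictly positive probability densities: for each θ, p(θ, ·) is measurable with ∫_T p(θ, τ) dμ(τ) = 1. Fix θ₁, θ₂ ∈ ℝ^d and constants G' ≥ 0, M' ≥ 0, W ≥ 0. Assume: (i) for each τ, the map θ ↦ p(θ, τ) is twice differentiable, with ‖∇_θ log p(θ, τ)‖₂ ≤ G' and ‖∇²_θ log p(θ, τ)‖_op ≤ M' for all θ on the segment joining θ₂ and θ₁; (ii) the function D(θ) := ∫_T p(θ, τ)²/p(θ₂, τ) dμ(τ) is finite and twice continuously differentiable on this segment, with its gradient and Hessian obtained by differentiating under the integral sign, and also ∫_T ∇_θ p(θ, τ)|_{θ=θ₂} dμ(τ) = 0; (iii) D(θ) ≤ W + 1 for all θ on the segment. Then the importance weight ω(τ) := p(θ₁, τ)/p(θ₂, τ), viewed as a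 random variable under the probability measure with density p(θ₂, ·) with respect to μ, satisfies Var(ω) = D(θ₁) − 1 ≤ (2G'² + M')(W + 1)·‖θ₁ − θ₂‖₂². -/
open MeasureTheory

/-- Second-order upper bound along a segment: a `C²` function with vanishing gradient at `x` and
Hessian of norm at most `K` on the segment grows at most like `K / 2 * ‖y - x‖ ^ 2`. -/
theorem sub_le_of_norm_iteratedFDeriv_two_le {E : Type*} [NormedAddCommGroup E] [NormedSpace ℝ E]
    {D : E → ℝ} {x y : E} {K : ℝ} (hD : ∀ z ∈ segment ℝ x y, ContDiffAt ℝ 2 D z)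
    (hgrad : fderiv ℝ D x = 0) (hK : ∀ z ∈ segment ℝ x y, ‖iteratedFDeriv ℝ 2 D z‖ ≤ K) :
    D y - D x ≤ K / 2 * ‖y - x‖ ^ 2 := by
  set v := y - x with hv
  set γ : ℝ → E := fun t => x + t • v with hγ
  have hmem : ∀ t ∈ Set.Icc (0 : ℝ) 1, γ t ∈ segment ℝ x y := fun t ht => by
    rw [segment_eq_image']
    exact ⟨t, ht, rfl⟩
  have hγd : ∀ t, HasDerivAt γ v t := fun t => by
    simpa [hγ] using ((hasDerivAt_id t).smul_const v).const_add x
  have hfirst : ∀ t ∈ Set.Icc (0 : ℝ) 1,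
      HasDerivAt (fun s => D (γ s)) (fderiv ℝ D (γ t) v) t := fun t ht =>
    ((hD _ (hmem t ht)).differentiableAt (by norm_num)).hasFDerivAt.comp_hasDerivAt t (hγd t)
  have hsecond : ∀ t ∈ Set.Icc (0 : ℝ) 1,
      HasDerivAt (fun s => fderiv ℝ D (γ s) v) (fderiv ℝ (fderiv ℝ D) (γ t) v v) t := by
    intro t ht
    have hdiff : DifferentiableAt ℝ (fderiv ℝ D) (γ t) :=
      ((hD _ (hmem t ht)).fderiv_right (m := 1) (by norm_num)).differentiableAt (by norm_num)
    have h := hdiff.hasFDerivAt.comp_hasDerivAt t (hγd t)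
    simpa using h.clm_apply (hasDerivAt_const t v)
  have hbound : ∀ t ∈ Set.Icc (0 : ℝ) 1,
      fderiv ℝ (fderiv ℝ D) (γ t) v v ≤ K * ‖v‖ ^ 2 := by
    intro t ht
    have h := (iteratedFDeriv ℝ 2 D (γ t)).le_opNorm ![v, v]
    rw [iteratedFDeriv_two_apply] at h
    simp only [Fin.prod_univ_two, Matrix.cons_val_zero, Matrix.cons_val_one] at h
    calc _ ≤ ‖iteratedFDeriv ℝ 2 D (γ t)‖ * (‖v‖ * ‖v‖) := (le_abs_self _).trans h
      _ ≤ K * (‖v‖ * ‖v‖) := by gcongr; exact hK _ (hmem t ht)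
      _ = _ := by ring
  have hslope : ∀ t ∈ Set.Icc (0 : ℝ) 1, fderiv ℝ D (γ t) v - K * ‖v‖ ^ 2 * t ≤ 0 := by
    have hd : ∀ t ∈ Set.Icc (0 : ℝ) 1,
        HasDerivAt (fun s => fderiv ℝ D (γ s) v - K * ‖v‖ ^ 2 * s)
          (fderiv ℝ (fderiv ℝ D) (γ t) v v - K * ‖v‖ ^ 2) t := fun t ht => by
      have h := (hsecond t ht).sub ((hasDerivAt_id t).const_mul (K * ‖v‖ ^ 2))
      rw [mul_one] at h
      exact h
    have hanti := antitoneOn_of_hasDerivWithinAt_nonpos (convex_Icc (0 : ℝ) 1)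
      (fun t ht => (hd t ht).continuousAt.continuousWithinAt)
      (fun t ht => (hd t (interior_subset ht)).hasDerivWithinAt)
      (fun t ht => sub_nonpos.2 (hbound t (interior_subset ht)))
    intro t ht
    simpa [hγ, hgrad] using hanti (Set.left_mem_Icc.2 zero_le_one) ht ht.1
  have hd : ∀ t ∈ Set.Icc (0 : ℝ) 1,
      HasDerivAt (fun s => D (γ s) - K * ‖v‖ ^ 2 / 2 * s ^ 2)
        (fderiv ℝ D (γ t) v - K * ‖v‖ ^ 2 * t) t := fun t ht => by
    refine ((hfirst t ht).sub ((hasDerivAt_pow 2 t).const_mul (K * ‖v‖ ^ 2 / 2))).congr_deriv ?_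
    norm_num
    ring
  have hanti := antitoneOn_of_hasDerivWithinAt_nonpos (convex_Icc (0 : ℝ) 1)
    (fun t ht => (hd t ht).continuousAt.continuousWithinAt)
    (fun t ht => (hd t (interior_subset ht)).hasDerivWithinAt)
    (fun t ht => hslope t (interior_subset ht))
  have h := hanti (Set.left_mem_Icc.2 zero_le_one) (Set.right_mem_Icc.2 zero_le_one) zero_le_one
  simp only [hγ, one_smul, zero_smul, add_zero] at h
  rw [show x + v = y by simp [hv]] at h
  linarith

/-- Logarithmic differentiation of `q ^ 2 / c`. -/
theorem hasFDerivAt_sq_div_const {E : Type*} [NormedAddCommGroup E] [NormedSpace ℝ E]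
    {q : E → ℝ} {c : ℝ} {x : E} (hx : q x ≠ 0) (hq : DifferentiableAt ℝ q x) :
    HasFDerivAt (fun z => q z ^ 2 / c)
      ((2 * (q x ^ 2 / c)) • fderiv ℝ (fun z => Real.log (q z)) x) x := by
  rw [(hq.hasFDerivAt.log hx).fderiv]
  simp only [div_eq_mul_inv]
  refine ((hq.hasFDerivAt.pow 2).mul_const c⁻¹).congr_fderiv ?_
  simp only [smul_smul]
  congr 1
  norm_num
  field_simp

/-- The Hessian of `q ^ 2 / c` in terms of bounds on the derivatives of `log q`. -/
theorem norm_iteratedFDeriv_two_sq_div_const_le {E : Type*} [NormedAddCommGroup E]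
    [NormedSpace ℝ E] {q : E → ℝ} {c G M : ℝ} {x : E} (hc : 0 < c) (hpos : ∀ z, 0 < q z)
    (hq : ContDiff ℝ 2 q) (hG : ‖fderiv ℝ (fun z => Real.log (q z)) x‖ ≤ G)
    (hM : ‖iteratedFDeriv ℝ 2 (fun z => Real.log (q z)) x‖ ≤ M) :
    ‖iteratedFDeriv ℝ 2 (fun z => q z ^ 2 / c) x‖ ≤ (4 * G ^ 2 + 2 * M) * (q x ^ 2 / c) := by
  set ℓ : E → ℝ := fun z => Real.log (q z) with hℓ
  have hqd : Differentiable ℝ q := hq.differentiable (by norm_num)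
  have hfirst := fun z => hasFDerivAt_sq_div_const (c := c) (hpos z).ne' (hqd z)
  have hlog : ContDiff ℝ 2 ℓ := hq.log fun z => (hpos z).ne'
  have hlogd : DifferentiableAt ℝ (fderiv ℝ ℓ) x :=
    (hlog.fderiv_right (m := 1) (by norm_num)).differentiable (by norm_num) x
  have hfd : fderiv ℝ (fun z => q z ^ 2 / c) = fun z => (2 * (q z ^ 2 / c)) • fderiv ℝ ℓ z :=
    funext fun z => (hfirst z).fderiv
  have hsecond := ((hfirst x).const_mul 2).smul hlogd.hasFDerivAt
  have hf0 : 0 ≤ q x ^ 2 / c := by positivity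
  have hG0 : 0 ≤ G := (norm_nonneg _).trans hG
  have hM0 : 0 ≤ M := (norm_nonneg _).trans hM
  refine ContinuousMultilinearMap.opNorm_le_bound (by positivity) fun m => ?_
  have hL : ∀ v, |fderiv ℝ ℓ x v| ≤ G * ‖v‖ := fun v => (fderiv ℝ ℓ x).le_of_opNorm_le hG v
  have hH : |fderiv ℝ (fderiv ℝ ℓ) x (m 0) (m 1)| ≤ M * (‖m 0‖ * ‖m 1‖) := by
    have h := (iteratedFDeriv ℝ 2 ℓ x).le_of_opNorm_le hM m
    rwa [iteratedFDeriv_two_apply, Fin.prod_univ_two] at h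
  have hLL : |fderiv ℝ ℓ x (m 0) * fderiv ℝ ℓ x (m 1)| ≤ G ^ 2 * (‖m 0‖ * ‖m 1‖) := by
    rw [abs_mul]
    calc _ ≤ (G * ‖m 0‖) * (G * ‖m 1‖) := by gcongr <;> exact hL _
      _ = _ := by ring
  have hval : iteratedFDeriv ℝ 2 (fun z => q z ^ 2 / c) x m = q x ^ 2 / c *
      (4 * (fderiv ℝ ℓ x (m 0) * fderiv ℝ ℓ x (m 1))
        + 2 * fderiv ℝ (fderiv ℝ ℓ) x (m 0) (m 1)) := by
    rw [iteratedFDeriv_two_apply, hfd]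
    erw [hsecond.fderiv]
    simp
    ring
  rw [hval, Fin.prod_univ_two, Real.norm_eq_abs, abs_mul, abs_of_nonneg hf0]
  calc _ ≤ q x ^ 2 / c * (4 * (G ^ 2 * (‖m 0‖ * ‖m 1‖)) + 2 * (M * (‖m 0‖ * ‖m 1‖))) := by
        gcongr
        refine (abs_add_le _ _).trans ?_
        rw [abs_mul 4, abs_mul 2, Nat.abs_ofNat, Nat.abs_ofNat]
        gcongr
    _ = _ := by ring

/-- The variance of the ratio of two densities under the second one. -/
theorem variance_div_withDensity {T : Type*} [MeasurableSpace T] {μ : Measure T} {f g : T → ℝ}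
    (hf : Measurable f) (hg : Measurable g) (hgpos : ∀ τ, 0 < g τ)
    (hf1 : ∫ τ, f τ ∂μ = 1) (hg1 : ∫ τ, g τ ∂μ = 1)
    (hint : Integrable (fun τ => f τ ^ 2 / g τ) μ) :
    ProbabilityTheory.variance (fun τ => f τ / g τ)
      (μ.withDensity (fun τ => ENNReal.ofReal (g τ))) = ∫ τ, f τ ^ 2 / g τ ∂μ - 1 := by
  have hgint : Integrable g μ := by
    by_contra h
    simp [integral_undef h] at hg1
  have : IsProbabilityMeasure (μ.withDensity fun τ => ENNReal.ofReal (g τ)) := by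
    refine ⟨?_⟩
    rw [withDensity_apply _ MeasurableSet.univ, Measure.restrict_univ,
      ← ofReal_integral_eq_lintegral_ofReal hgint (ae_of_all _ fun τ => (hgpos τ).le), hg1,
      ENNReal.ofReal_one]
  have hlt : ∀ᵐ τ ∂μ, ENNReal.ofReal (g τ) < ⊤ := ae_of_all _ fun τ => ENNReal.ofReal_lt_top
  have hint_eq : ∀ h : T → ℝ, ∫ τ, h τ ∂μ.withDensity (fun τ => ENNReal.ofReal (g τ))
      = ∫ τ, g τ * h τ ∂μ := fun h => by
    rw [integral_withDensity_eq_integral_toReal_smul hg.ennreal_ofReal hlt]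
    simp [ENNReal.toReal_ofReal (hgpos _).le]
  have hsq : ∀ τ, g τ * (f τ / g τ) ^ 2 = f τ ^ 2 / g τ := fun τ => by
    have := (hgpos τ).ne'
    field_simp
  have hone : ∀ τ, g τ * (f τ / g τ) = f τ := fun τ => mul_div_cancel₀ _ (hgpos τ).ne'
  have hLp : MemLp (fun τ => f τ / g τ) 2 (μ.withDensity fun τ => ENNReal.ofReal (g τ)) := by
    refine (memLp_two_iff_integrable_sq (hf.div hg).aestronglyMeasurable).2 ?_
    rw [integrable_withDensity_iff hg.ennreal_ofReal hlt]
    refine hint.congr (ae_of_all _ fun τ => ?_)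
    simp only [ENNReal.toReal_ofReal (hgpos τ).le, Pi.div_apply]
    rw [mul_comm, hsq]
  rw [ProbabilityTheory.variance_eq_sub hLp]
  simp only [Pi.pow_apply, hint_eq, hsq, hone, hf1]
  norm_num

/-- Variance bound for importance sampling weights: under smoothness and boundedness of
the family of densities `p(θ, ·)` along the segment from `θ₂` to `θ₁`, the importance
weight `ω(τ) = p(θ₁,τ)/p(θ₂,τ)`, as a random variable under the probability measure with
density `p(θ₂,·)` w.r.t. `μ`, has variance `D(θ₁) - 1 ≤ (2G'² + M')(W+1)‖θ₁ - θ₂‖²`,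
where `D(θ) = ∫ p(θ,τ)²/p(θ₂,τ) dμ`. -/
theorem importance_weight_variance_bound {T : Type*} [MeasurableSpace T] (μ : Measure T)
    {d : ℕ} (θ₁ θ₂ : EuclideanSpace ℝ (Fin d)) (G' M' W : ℝ)
    (hG' : 0 ≤ G') (hM' : 0 ≤ M') (hW : 0 ≤ W)
    (p : EuclideanSpace ℝ (Fin d) → T → ℝ)
    (hmeas : ∀ θ, Measurable (p θ))
    (hpos : ∀ θ τ, 0 < p θ τ)
    (hnorm : ∀ θ, ∫ τ, p θ τ ∂μ = 1)
    (hsmooth : ∀ τ, ContDiff ℝ 2 (fun θ => p θ τ))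
    (hscore : ∀ τ, ∀ θ ∈ segment ℝ θ₂ θ₁,
      ‖gradient (fun θ' => Real.log (p θ' τ)) θ‖ ≤ G')
    (hloghess : ∀ τ, ∀ θ ∈ segment ℝ θ₂ θ₁,
      ‖iteratedFDeriv ℝ 2 (fun θ' => Real.log (p θ' τ)) θ‖ ≤ M')
    (D : EuclideanSpace ℝ (Fin d) → ℝ)
    (hD : ∀ θ, D θ = ∫ τ, p θ τ ^ 2 / p θ₂ τ ∂μ)
    (hDfin : ∀ θ ∈ segment ℝ θ₂ θ₁, Integrable (fun τ => p θ τ ^ 2 / p θ₂ τ) μ)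
    (hDC2 : ∀ θ ∈ segment ℝ θ₂ θ₁, ContDiffAt ℝ 2 D θ)
    (hgradD : ∀ θ ∈ segment ℝ θ₂ θ₁,
      gradient D θ = ∫ τ, gradient (fun θ' => p θ' τ ^ 2 / p θ₂ τ) θ ∂μ)
    (hhessD : ∀ θ ∈ segment ℝ θ₂ θ₁,
      iteratedFDeriv ℝ 2 D θ
        = ∫ τ, iteratedFDeriv ℝ 2 (fun θ' => p θ' τ ^ 2 / p θ₂ τ) θ ∂μ)
    (hgradzero : (∫ τ, gradient (fun θ => p θ τ) θ₂ ∂μ) = 0)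
    (hDbd : ∀ θ ∈ segment ℝ θ₂ θ₁, D θ ≤ W + 1) :
    ProbabilityTheory.variance (fun τ => p θ₁ τ / p θ₂ τ)
        (μ.withDensity (fun τ => ENNReal.ofReal (p θ₂ τ))) = D θ₁ - 1 ∧
    D θ₁ - 1 ≤ (2 * G' ^ 2 + M') * (W + 1) * ‖θ₁ - θ₂‖ ^ 2 := by
  have hmem₁ : θ₁ ∈ segment ℝ θ₂ θ₁ := right_mem_segment ℝ θ₂ θ₁
  have hmem₂ : θ₂ ∈ segment ℝ θ₂ θ₁ := left_mem_segment ℝ θ₂ θ₁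
  refine ⟨?_, ?_⟩
  · rw [hD]
    exact variance_div_withDensity (hmeas _) (hmeas _) (hpos _) (hnorm _) (hnorm _)
      (hDfin _ hmem₁)
  have hD₂ : D θ₂ = 1 := by
    rw [hD, ← hnorm θ₂]
    refine integral_congr_ae (ae_of_all _ fun τ => ?_)
    have := (hpos θ₂ τ).ne'
    simp only
    field_simp
  have hgrad : fderiv ℝ D θ₂ = 0 := by
    have hpoint : ∀ τ, gradient (fun θ => p θ τ ^ 2 / p θ₂ τ) θ₂
        = (2 : ℝ) • gradient (fun θ => p θ τ) θ₂ := fun τ => by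
      have hdiff : DifferentiableAt ℝ (fun θ => p θ τ) θ₂ :=
        (hsmooth τ).differentiable (by norm_num) θ₂
      have hne := (hpos θ₂ τ).ne'
      rw [gradient, gradient,
        (hasFDerivAt_sq_div_const (q := fun θ => p θ τ) (c := p θ₂ τ) hne hdiff).fderiv,
        (hdiff.hasFDerivAt.log hne).fderiv, smul_smul, map_smulₛₗ]
      congr 1
      simp only [conj_trivial]
      field_simp
    have h := hgradD θ₂ hmem₂
    simp only [hpoint] at h
    rw [integral_smul, hgradzero, smul_zero] at h
    simpa [gradient] using h
  have hhess : ∀ θ ∈ segment ℝ θ₂ θ₁,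
      ‖iteratedFDeriv ℝ 2 D θ‖ ≤ (4 * G' ^ 2 + 2 * M') * (W + 1) := by
    intro θ hθ
    rw [hhessD θ hθ]
    calc _ ≤ ∫ τ, (4 * G' ^ 2 + 2 * M') * (p θ τ ^ 2 / p θ₂ τ) ∂μ := by
          refine norm_integral_le_of_norm_le ((hDfin θ hθ).const_mul _) (ae_of_all _ fun τ => ?_)
          refine norm_iteratedFDeriv_two_sq_div_const_le (hpos θ₂ τ) (fun θ => hpos θ τ)
            (hsmooth τ) ?_ (hloghess τ θ hθ)
          simpa [gradient] using hscore τ θ hθ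
      _ = (4 * G' ^ 2 + 2 * M') * D θ := by rw [integral_const_mul, hD]
      _ ≤ _ := by gcongr; exact hDbd θ hθ
  have h := sub_le_of_norm_iteratedFDeriv_two_le hDC2 hgrad hhess
  rw [hD₂] at h
  linarith
end

section
/- Let (T, 𝒯, μ) be a measure space, d ∈ ℕ, θ, θ₂ ∈ ℝ^d, G', M' ≥ 0, and let p : ℝ^d × T → (0, ∞) be such that each p(θ', ·) is measurable, each τ-section θ' ↦ p(θ', τ) is twice differentiable at θ with ‖∇_θ log p(θ, τ)‖₂ ≤ G' and ‖∇²_θ log p(θ, τ)‖_op ≤ M' for all τ. Suppose D(θ) = ∫_T p(θ, τ)²/p(θ₂, τ) dμ(τ) is finite and twice differentiable at θ with ∇²D(θ) = ∫_T ∇²_θ (p(θ, τ)²/p(θ₂, τ)) dμ(τ) (differentiation under the integral). Then ‖∇²D(θ)‖_op ≤ (4G'² + 2M')·D(θ). -/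
open MeasureTheory

/-- The Hessian of `exp ∘ v` is `exp v • (∇²v + ∇v ∇vᵀ)`. -/
theorem iteratedFDeriv_two_exp_apply {E : Type*} [NormedAddCommGroup E] [NormedSpace ℝ E]
    {v : E → ℝ} {x : E} (hv : ContDiffAt ℝ 2 v x) (m : Fin 2 → E) :
    iteratedFDeriv ℝ 2 (fun y => Real.exp (v y)) x m
      = Real.exp (v x)
        * (iteratedFDeriv ℝ 2 v x m + fderiv ℝ v x (m 0) * fderiv ℝ v x (m 1)) := by
  have hfirst : fderiv ℝ (fun y => Real.exp (v y)) =ᶠ[nhds x]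
      fun y => Real.exp (v y) • fderiv ℝ v y := by
    filter_upwards [hv.eventually (by simp)] with y hy
    exact ((hy.differentiableAt (by simp)).hasFDerivAt.exp).fderiv
  have hdv : HasFDerivAt v (fderiv ℝ v x) x := (hv.differentiableAt (by simp)).hasFDerivAt
  have hddv : HasFDerivAt (fderiv ℝ v) (fderiv ℝ (fderiv ℝ v) x) x :=
    ((hv.fderiv_right (m := 1) (by norm_num)).differentiableAt (by simp)).hasFDerivAt
  rw [iteratedFDeriv_two_apply, iteratedFDeriv_two_apply, hfirst.fderiv_eq,
    (hdv.exp.fun_smul hddv).fderiv]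
  simp
  ring

theorem norm_iteratedFDeriv_two_exp_le {E : Type*} [NormedAddCommGroup E] [NormedSpace ℝ E]
    {v : E → ℝ} {x : E} (hv : ContDiffAt ℝ 2 v x) :
    ‖iteratedFDeriv ℝ 2 (fun y => Real.exp (v y)) x‖
      ≤ Real.exp (v x) * (‖iteratedFDeriv ℝ 2 v x‖ + ‖fderiv ℝ v x‖ ^ 2) := by
  refine ContinuousMultilinearMap.opNorm_le_bound (by positivity) fun m => ?_
  have hhess := (iteratedFDeriv ℝ 2 v x).le_opNorm m
  rw [Fin.prod_univ_two] at hhess ⊢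
  rw [iteratedFDeriv_two_exp_apply hv, norm_mul, Real.norm_of_nonneg (Real.exp_nonneg _),
    mul_assoc]
  gcongr
  calc _ ≤ ‖iteratedFDeriv ℝ 2 v x m‖ + ‖fderiv ℝ v x (m 0)‖ * ‖fderiv ℝ v x (m 1)‖ := by
        rw [← norm_mul]
        exact norm_add_le _ _
    _ ≤ ‖iteratedFDeriv ℝ 2 v x‖ * (‖m 0‖ * ‖m 1‖)
        + (‖fderiv ℝ v x‖ * ‖m 0‖) * (‖fderiv ℝ v x‖ * ‖m 1‖) := by
        gcongr <;> exact ContinuousLinearMap.le_opNorm _ _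
    _ = _ := by ring

/-- Hessian bound for `q² / c` in terms of the first two derivatives of `log q`. -/
theorem norm_iteratedFDeriv_two_sq_div_le {E : Type*} [NormedAddCommGroup E] [NormedSpace ℝ E]
    {q : E → ℝ} {x : E} {c : ℝ} (hc : 0 < c) (hpos : ∀ y, 0 < q y) (hq : ContDiffAt ℝ 2 q x) :
    ‖iteratedFDeriv ℝ 2 (fun y => q y ^ 2 / c) x‖
      ≤ (4 * ‖fderiv ℝ (fun y => Real.log (q y)) x‖ ^ 2
        + 2 * ‖iteratedFDeriv ℝ 2 (fun y => Real.log (q y)) x‖) * (q x ^ 2 / c) := by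
  set u : E → ℝ := fun y => Real.log (q y)
  have hu : ContDiffAt ℝ 2 u x := hq.log (hpos x).ne'
  have hexp : ∀ y, Real.exp (2 * u y - Real.log c) = q y ^ 2 / c := fun y => by
    rw [Real.exp_sub, Real.exp_log hc, two_mul, Real.exp_add, Real.exp_log (hpos y), sq]
  have hv : ContDiffAt ℝ 2 (fun y => 2 * u y - Real.log c) x :=
    (contDiffAt_const.mul hu).sub contDiffAt_const
  have hfirst : fderiv ℝ (fun y => 2 * u y - Real.log c) =ᶠ[nhds x]
      fun y => (2 : ℝ) • fderiv ℝ u y := by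
    filter_upwards [hu.eventually (by simp)] with y hy
    rw [fderiv_sub_const, fderiv_const_mul (hy.differentiableAt (by simp))]
  have hsecond : iteratedFDeriv ℝ 2 (fun y => 2 * u y - Real.log c) x
      = (2 : ℝ) • iteratedFDeriv ℝ 2 u x := by
    ext m
    have hddu : DifferentiableAt ℝ (fderiv ℝ u) x :=
      (hu.fderiv_right (m := 1) (by norm_num)).differentiableAt (by simp)
    rw [smul_apply, iteratedFDeriv_two_apply, iteratedFDeriv_two_apply,
      hfirst.fderiv_eq, fderiv_fun_const_smul hddu]
    rfl
  have hbound := norm_iteratedFDeriv_two_exp_le hv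
  simp only [hexp] at hbound
  rw [hsecond, hfirst.eq_of_nhds, norm_smul, norm_smul, Real.norm_two] at hbound
  linarith

/-- Hessian bound for the exponentiated Rényi divergence of order 2,
`D(θ) = ∫ p(θ,τ)²/p(θ₂,τ) dμ`: under the score bound `G'` and log-Hessian bound `M'`
at `θ`, and differentiation under the integral sign, `‖∇²D(θ)‖ ≤ (4G'² + 2M')·D(θ)`. -/
theorem renyi_divergence_hessian_bound {T : Type*} [MeasurableSpace T] (μ : Measure T)
    {d : ℕ} (θ θ₂ : EuclideanSpace ℝ (Fin d)) (G' M' : ℝ) (hG' : 0 ≤ G') (hM' : 0 ≤ M')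
    (p : EuclideanSpace ℝ (Fin d) → T → ℝ)
    (hmeas : ∀ θ', Measurable (p θ'))
    (hpos : ∀ θ' τ, 0 < p θ' τ)
    (hsmooth : ∀ τ, ContDiffAt ℝ 2 (fun θ' => p θ' τ) θ)
    (hscore : ∀ τ, ‖gradient (fun θ' => Real.log (p θ' τ)) θ‖ ≤ G')
    (hloghess : ∀ τ, ‖iteratedFDeriv ℝ 2 (fun θ' => Real.log (p θ' τ)) θ‖ ≤ M')
    (D : EuclideanSpace ℝ (Fin d) → ℝ)
    (hD : ∀ θ', D θ' = ∫ τ, p θ' τ ^ 2 / p θ₂ τ ∂μ)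
    (hfin : Integrable (fun τ => p θ τ ^ 2 / p θ₂ τ) μ)
    (hC2 : ContDiffAt ℝ 2 D θ)
    (hhessD : iteratedFDeriv ℝ 2 D θ
      = ∫ τ, iteratedFDeriv ℝ 2 (fun θ' => p θ' τ ^ 2 / p θ₂ τ) θ ∂μ) :
    ‖iteratedFDeriv ℝ 2 D θ‖ ≤ (4 * G' ^ 2 + 2 * M') * D θ := by
  rw [hhessD, hD θ, ← integral_const_mul]
  refine norm_integral_le_of_norm_le (hfin.const_mul _) (Filter.Eventually.of_forall fun τ => ?_)
  have hgrad : ‖fderiv ℝ (fun θ' => Real.log (p θ' τ)) θ‖ ≤ G' := by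
    simpa [gradient] using hscore τ
  have hc := hpos θ₂ τ
  refine (norm_iteratedFDeriv_two_sq_div_le hc (fun θ' => hpos θ' τ) (hsmooth τ)).trans ?_
  gcongr
  exact hloghess τ
end

section
/- Let (T, 𝒯, μ) be a measure space, d, H ∈ ℕ with H ≥ 1, G, M ≥ 0, R > 0, γ ∈ (0, 1). Let R_f : T → ℝ be measurable with 0 ≤ R_f(τ) ≤ R/(1 − γ) for all τ, and let p : ℝ^d × T → (0, ∞) be such that each p(θ, ·) is measurable with ∫_T p(θ, τ) dμ(τ) = 1, each θ ↦ p(θ, τ) is twice differentiable, and for all θ, τ: ‖∇_θ log p(θ, τ)‖₂ ≤ H·G and ‖∇²_θ log p(θ, τ)‖_op ≤ H·M. Suppose J(θ) = ∫_T R_f(τ) p(θ, τ) dμ(τ) is twice differentiable with ∇²J(θ) = ∫_T R_f(τ) ∇²_θ p(θ, τ) dμ(τ) for all θ (differentiation under the integral). Then for all θ, ‖∇²J(θ)‖_op ≤ H·R·(M + H·G²)/(1 − γ); in particular ∇J is Lipschitz continuous with constant L = H·R·(M + H·G²)/(1 − γ), i.e. J is L-smooth. -/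
open MeasureTheory

theorem norm_iteratedFDeriv_two {E F : Type*} [NormedAddCommGroup E] [NormedSpace ℝ E]
    [NormedAddCommGroup F] [NormedSpace ℝ F] (f : E → F) (x : E) :
    ‖iteratedFDeriv ℝ 2 f x‖ = ‖fderiv ℝ (fderiv ℝ f) x‖ := by
  rw [← norm_iteratedFDeriv_one, norm_iteratedFDeriv_fderiv]

/-- The Hessian of a positive function is controlled by the first two derivatives of its
logarithm. -/
theorem norm_iteratedFDeriv_two_le_of_log {E : Type*} [NormedAddCommGroup E] [NormedSpace ℝ E]
    {f : E → ℝ} (hf : ContDiff ℝ 2 f) (hpos : ∀ x, 0 < f x) (x : E) :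
    ‖iteratedFDeriv ℝ 2 f x‖ ≤ f x * (‖iteratedFDeriv ℝ 2 (fun y => Real.log (f y)) x‖
      + ‖fderiv ℝ (fun y => Real.log (f y)) x‖ ^ 2) := by
  have hlog : ContDiff ℝ 2 (fun y => Real.log (f y)) := hf.log fun y => (hpos y).ne'
  have hdf : Differentiable ℝ f := hf.differentiable two_ne_zero
  have hfderiv : fderiv ℝ f = fun y => f y • fderiv ℝ (fun z => Real.log (f z)) y := by
    funext y
    rw [fderiv.log (hdf y) (hpos y).ne', smul_smul, mul_inv_cancel₀ (hpos y).ne', one_smul]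
  have hdlog : DifferentiableAt ℝ (fderiv ℝ fun y => Real.log (f y)) x :=
    (hlog.fderiv_right (m := 1) (by norm_num)).differentiable one_ne_zero x
  have hnorm : ‖fderiv ℝ f x‖ = f x * ‖fderiv ℝ (fun y => Real.log (f y)) x‖ := by
    rw [congrFun hfderiv x, norm_smul, Real.norm_of_nonneg (hpos x).le]
  have hhess : fderiv ℝ (fderiv ℝ f) x =
      f x • fderiv ℝ (fderiv ℝ fun y => Real.log (f y)) x +
        (fderiv ℝ f x).smulRight (fderiv ℝ (fun y => Real.log (f y)) x) := by
    conv_lhs => rw [hfderiv]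
    exact fderiv_fun_smul (hdf x) hdlog
  rw [norm_iteratedFDeriv_two, norm_iteratedFDeriv_two, hhess]
  refine (ContinuousLinearMap.opNorm_add_le _ _).trans_eq ?_
  rw [norm_smul, Real.norm_of_nonneg (hpos x).le, ContinuousLinearMap.norm_smulRight_apply, hnorm]
  ring

theorem norm_gradient {E : Type*} [NormedAddCommGroup E] [InnerProductSpace ℝ E]
    [CompleteSpace E] (f : E → ℝ) (x : E) : ‖gradient f x‖ = ‖fderiv ℝ f x‖ :=
  LinearIsometryEquiv.norm_map _ _

/-- A bound on the Hessian is a Lipschitz constant for the gradient. -/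
theorem norm_gradient_sub_le_of_norm_iteratedFDeriv_two_le {E : Type*} [NormedAddCommGroup E]
    [InnerProductSpace ℝ E] [CompleteSpace E] {f : E → ℝ} {C : ℝ} (hf : ContDiff ℝ 2 f)
    (hC : ∀ x, ‖iteratedFDeriv ℝ 2 f x‖ ≤ C) (x y : E) :
    ‖gradient f x - gradient f y‖ ≤ C * ‖x - y‖ := by
  have hdiff : Differentiable ℝ (fderiv ℝ f) :=
    (hf.fderiv_right (m := 1) (by norm_num)).differentiable one_ne_zero
  rw [gradient, gradient, ← map_sub, LinearIsometryEquiv.norm_map]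
  exact convex_univ.norm_image_sub_le_of_norm_fderiv_le (fun z _ => hdiff z)
    (fun z _ => norm_iteratedFDeriv_two f z ▸ hC z) (Set.mem_univ y) (Set.mem_univ x)

/-- Smoothness of the performance function `J(θ) = ∫ R_f(τ) p(θ,τ) dμ(τ)`: under the
trajectory score bound `H·G` and log-density Hessian bound `H·M`, with rewards in
`[0, R/(1-γ)]` and differentiation under the integral sign, the Hessian of `J` is
bounded by `L = H·R·(M + H·G²)/(1-γ)` in operator norm, and `∇J` is `L`-Lipschitz. -/
theorem performance_function_smooth {T : Type*} [MeasurableSpace T] (μ : Measure T)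
    {d H : ℕ} (hH : 1 ≤ H) (G M R γ : ℝ) (hG : 0 ≤ G) (hM : 0 ≤ M)
    (hR : 0 < R) (hγ : γ ∈ Set.Ioo (0 : ℝ) 1)
    (Rf : T → ℝ) (hRf_meas : Measurable Rf)
    (hRf : ∀ τ, Rf τ ∈ Set.Icc (0 : ℝ) (R / (1 - γ)))
    (p : EuclideanSpace ℝ (Fin d) → T → ℝ)
    (hp_meas : ∀ θ, Measurable (p θ))
    (hp_pos : ∀ θ τ, 0 < p θ τ)
    (hp_norm : ∀ θ, ∫ τ, p θ τ ∂μ = 1)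
    (hp_smooth : ∀ τ, ContDiff ℝ 2 (fun θ => p θ τ))
    (hscore : ∀ θ τ, ‖gradient (fun θ' => Real.log (p θ' τ)) θ‖ ≤ (H : ℝ) * G)
    (hloghess : ∀ θ τ,
      ‖iteratedFDeriv ℝ 2 (fun θ' => Real.log (p θ' τ)) θ‖ ≤ (H : ℝ) * M)
    (J : EuclideanSpace ℝ (Fin d) → ℝ)
    (hJ : ∀ θ, J θ = ∫ τ, Rf τ * p θ τ ∂μ)
    (hJ_smooth : ContDiff ℝ 2 J)
    (hJ_hess : ∀ θ, iteratedFDeriv ℝ 2 J θ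
      = ∫ τ, Rf τ • iteratedFDeriv ℝ 2 (fun θ' => p θ' τ) θ ∂μ) :
    (∀ θ, ‖iteratedFDeriv ℝ 2 J θ‖ ≤ (H : ℝ) * R * (M + (H : ℝ) * G ^ 2) / (1 - γ)) ∧
    (∀ θ₁ θ₂, ‖gradient J θ₁ - gradient J θ₂‖
      ≤ ((H : ℝ) * R * (M + (H : ℝ) * G ^ 2) / (1 - γ)) * ‖θ₁ - θ₂‖) := by
  have hγ' : 0 < 1 - γ := sub_pos.2 hγ.2
  have hhess : ∀ θ, ‖iteratedFDeriv ℝ 2 J θ‖ ≤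
      (H : ℝ) * R * (M + (H : ℝ) * G ^ 2) / (1 - γ) := by
    intro θ
    have hint : Integrable (p θ) μ := .of_integral_ne_zero (by simp [hp_norm θ])
    have hbound : ∀ τ, ‖Rf τ • iteratedFDeriv ℝ 2 (fun θ' => p θ' τ) θ‖ ≤
        (H : ℝ) * R * (M + (H : ℝ) * G ^ 2) / (1 - γ) * p θ τ := by
      intro τ
      have hs := hscore θ τ
      rw [norm_gradient] at hs
      have hp := (hp_pos θ τ).le
      rw [norm_smul, Real.norm_of_nonneg (hRf τ).1]
      calc
        _ ≤ R / (1 - γ) * (p θ τ * ((H : ℝ) * M + ((H : ℝ) * G) ^ 2)) := by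
          refine mul_le_mul (hRf τ).2 ?_ (norm_nonneg _) (by positivity)
          refine (norm_iteratedFDeriv_two_le_of_log (hp_smooth τ) (hp_pos · τ) θ).trans ?_
          gcongr
          exact hloghess θ τ
        _ = _ := by ring
    rw [hJ_hess θ]
    refine (norm_integral_le_of_norm_le (hint.const_mul _) (.of_forall hbound)).trans_eq ?_
    rw [integral_const_mul, hp_norm θ, mul_one]
  exact ⟨hhess, norm_gradient_sub_le_of_norm_iteratedFDeriv_two_le hJ_smooth hhess⟩
end
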